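/- arXiv:1303.2590 — 2 statements merged into one kernel-verified Lean document; each statement's English description precedes it below -/
import Mathlib

section
/- For every real τ, every Schwartz symbol a : ℝ²ⁿ → ℂ and all Schwartz functions ψ, φ : ℝⁿ → ℂ, ∫_{ℝⁿ} (A_τψ)(x)·conj(φ(x)) dx = ∫_{ℝⁿ} ψ(y)·conj((B_{1−τ}φ)(y)) dy, where B_{1−τ} is the Shubin (1−τ)-operator with symbol conj(a). In other words, the formal adjoint of Op_τ(a) is Op_{1−τ}(conj(a)). -/
open MeasureTheory Real Complex

noncomputable section

/-- Euclidean dot product on `ℝⁿ`. -/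
def dotR {n : ℕ} (p y : Fin n → ℝ) : ℝ := ∑ i, p i * y i

/-- The `τ`-Wigner cross-distribution
`Wig_τ(ψ,φ)(x,p) = (2πhbar)^(−n) ∫ e^(−(i/hbar) p·y) ψ(x+τy) conj(φ(x−(1−τ)y)) dy`. -/
def WigTau (hbar : ℝ) {n : ℕ} (τ : ℝ) (ψ φ : (Fin n → ℝ) → ℂ) (x p : Fin n → ℝ) : ℂ :=
  ((((2 * π * hbar) ^ n : ℝ))⁻¹ : ℂ) *
    ∫ y : Fin n → ℝ,
      Complex.exp (-(Complex.I / (hbar : ℂ)) * (dotR p y : ℝ)) *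
        ψ (x + τ • y) * (starRingEnd ℂ) (φ (x - (1 - τ) • y))

/-- The Born–Jordan–Wigner cross-distribution: the average of the
`τ`-Wigner distributions over `τ ∈ [0,1]`. -/
def WigBJ (hbar : ℝ) {n : ℕ} (ψ φ : (Fin n → ℝ) → ℂ) (x p : Fin n → ℝ) : ℂ :=
  ∫ τ in (0:ℝ)..1, WigTau hbar τ ψ φ x p

/-- The `hbar`-Fourier transform `Fψ(p) = (2πhbar)^(−n/2) ∫ e^(−(i/hbar) p·x) ψ(x) dx`. -/
def FourierHbar (hbar : ℝ) {n : ℕ} (ψ : (Fin n → ℝ) → ℂ) (p : Fin n → ℝ) : ℂ :=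
  ((Real.sqrt ((2 * π * hbar) ^ n))⁻¹ : ℂ) *
    ∫ x : Fin n → ℝ, Complex.exp (-(Complex.I / (hbar : ℂ)) * (dotR p x : ℝ)) * ψ x

/-- The Shubin `τ`-operator
`A_τψ(x) = (2πhbar)^(−n) ∫∫ e^((i/hbar) p·(x−y)) a(τx+(1−τ)y, p) ψ(y) dp dy`,
the inner integral being over `p`. -/
def ShubinOp (hbar : ℝ) {n : ℕ} (τ : ℝ) (a : ((Fin n → ℝ) × (Fin n → ℝ)) → ℂ)
    (ψ : (Fin n → ℝ) → ℂ) (x : Fin n → ℝ) : ℂ :=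
  ((((2 * π * hbar) ^ n : ℝ))⁻¹ : ℂ) *
    ∫ y : Fin n → ℝ,
      (∫ p : Fin n → ℝ,
          Complex.exp ((Complex.I / (hbar : ℂ)) * (dotR p (x - y) : ℝ)) *
            a (τ • x + (1 - τ) • y, p)) * ψ y

/-- The Born–Jordan operator: the average of the Shubin `τ`-operators
over `τ ∈ [0,1]`. -/
def BJOp (hbar : ℝ) {n : ℕ} (a : ((Fin n → ℝ) × (Fin n → ℝ)) → ℂ)
    (ψ : (Fin n → ℝ) → ℂ) (x : Fin n → ℝ) : ℂ :=
  ∫ τ in (0:ℝ)..1, ShubinOp hbar τ a ψ x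

/-- `Θ(x,p) = sin(p·x/2hbar)/(p·x/2hbar)` (with value `1` when `p·x = 0`). -/
def Theta (hbar : ℝ) {n : ℕ} (x p : Fin n → ℝ) : ℝ :=
  if dotR p x = 0 then 1
  else Real.sin (dotR p x / (2 * hbar)) / (dotR p x / (2 * hbar))

/-- The modified Heisenberg–Weyl operator
`T̂_τ(z₀)ψ(x) = e^((i/hbar)(p₀·x − (1−τ)p₀·x₀)) ψ(x−x₀)`. -/
def THW (hbar : ℝ) {n : ℕ} (τ : ℝ) (z₀ : (Fin n → ℝ) × (Fin n → ℝ))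
    (ψ : (Fin n → ℝ) → ℂ) (x : Fin n → ℝ) : ℂ :=
  Complex.exp ((Complex.I / (hbar : ℂ)) *
      ((dotR z₀.2 x - (1 - τ) * dotR z₀.2 z₀.1 : ℝ) : ℂ)) * ψ (x - z₀.1)

/-- The symplectic Fourier transform
`F_σ a(z) = (2πhbar)^(−n) ∫ e^(−(i/hbar)σ(z,z′)) a(z′) dz′`,
`σ((x,p),(x′,p′)) = p·x′ − p′·x`. -/
def symplFT (hbar : ℝ) {n : ℕ} (a : ((Fin n → ℝ) × (Fin n → ℝ)) → ℂ)
    (z : (Fin n → ℝ) × (Fin n → ℝ)) : ℂ :=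
  ((((2 * π * hbar) ^ n : ℝ))⁻¹ : ℂ) *
    ∫ z' : (Fin n → ℝ) × (Fin n → ℝ),
      Complex.exp (-(Complex.I / (hbar : ℂ)) *
        ((dotR z.2 z'.1 - dotR z'.2 z.1 : ℝ) : ℂ)) * a z'

/-- The cross-ambiguity function
`Amb(ψ,φ)(x,p) = (2πhbar)^(−n) ∫ e^(−(i/hbar) p·x′) ψ(x′+x/2) conj(φ(x′−x/2)) dx′`. -/
def Amb (hbar : ℝ) {n : ℕ} (ψ φ : (Fin n → ℝ) → ℂ) (x p : Fin n → ℝ) : ℂ :=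
  ((((2 * π * hbar) ^ n : ℝ))⁻¹ : ℂ) *
    ∫ x' : Fin n → ℝ,
      Complex.exp (-(Complex.I / (hbar : ℂ)) * (dotR p x' : ℝ)) *
        ψ (x' + (1 / 2 : ℝ) • x) * (starRingEnd ℂ) (φ (x' - (1 / 2 : ℝ) • x))

/-!
`Op_τ(a)` is an integral operator with kernel
`K_τ^a(x, y) = (2πhbar)^(−n) ∫ e^((i/hbar) p·(x−y)) a(τx + (1−τ)y, p) dp`. Conjugation reverses the
phase, exchanging the roles of `x` and `y`, and the point `τx + (1−τ)y` at which the symbol is taken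
is unchanged by `(x, y, τ) ↦ (y, x, 1−τ)`. Hence `conj K_τ^a(x, y) = K_{1−τ}^{conj a}(y, x)`, and
Fubini's theorem, available because the kernel is bounded, gives the adjoint.
-/

section IntegralOperator

open scoped ComplexConjugate

variable {X Y 𝕜 : Type*} [MeasurableSpace X] [MeasurableSpace Y] [RCLike 𝕜]
  {μ : Measure X} {ν : Measure Y} {K : X → Y → 𝕜} {f : Y → 𝕜} {g : X → 𝕜}

lemma integral_kernel_mul_conj [SFinite μ] [SFinite ν]
    (h : Integrable (Function.uncurry fun x y ↦ K x y * f y * conj (g x)) (μ.prod ν)) :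
    ∫ x, (∫ y, K x y * f y ∂ν) * conj (g x) ∂μ =
      ∫ y, f y * conj (∫ x, conj (K x y) * g x ∂μ) ∂ν := by
  calc ∫ x, (∫ y, K x y * f y ∂ν) * conj (g x) ∂μ
      = ∫ x, ∫ y, K x y * f y * conj (g x) ∂ν ∂μ := by simp only [integral_mul_const]
    _ = ∫ y, ∫ x, K x y * f y * conj (g x) ∂μ ∂ν := integral_integral_swap h
    _ = ∫ y, ∫ x, f y * conj (conj (K x y) * g x) ∂μ ∂ν := by
      simp only [map_mul, RCLike.conj_conj, mul_assoc, mul_left_comm]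
    _ = ∫ y, f y * conj (∫ x, conj (K x y) * g x ∂μ) ∂ν := by
      simp only [integral_const_mul, integral_conj]

lemma integrable_kernel_mul_conj [SFinite ν] {C : ℝ}
    (hK : AEStronglyMeasurable (Function.uncurry K) (μ.prod ν)) (hKC : ∀ x y, ‖K x y‖ ≤ C)
    (hf : Integrable f ν) (hg : Integrable g μ) :
    Integrable (Function.uncurry fun x y ↦ K x y * f y * conj (g x)) (μ.prod ν) := by
  have hg_conj : Integrable (fun x ↦ conj (g x)) μ :=
    (LinearIsometryEquiv.integrable_comp_iff RCLike.conjLIE).2 hg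
  refine ((hg_conj.mul_prod hf).bdd_mul hK (.of_forall fun z ↦ hKC z.1 z.2)).congr
    (.of_forall fun z ↦ ?_)
  simp only [Function.uncurry_def]
  ring

end IntegralOperator

lemma exists_integrable_norm_schwartzMap_le_snd {E F G : Type*}
    [NormedAddCommGroup E] [NormedSpace ℝ E] [NormedAddCommGroup F] [NormedSpace ℝ F]
    [NormedAddCommGroup G] [NormedSpace ℝ G] [MeasurableSpace F]
    (μ : Measure F) [μ.HasTemperateGrowth] (a : SchwartzMap (E × F) G) :
    ∃ g : F → ℝ, Integrable g μ ∧ ∀ z, ‖a z‖ ≤ g z.2 := by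
  set k := μ.integrablePower
  obtain ⟨C, hC⟩ : ∃ C : ℝ, ∀ z, (1 + ‖z‖) ^ k * ‖a z‖ ≤ C :=
    ⟨_, fun z ↦ by
      simpa only [norm_iteratedFDeriv_zero] using
        SchwartzMap.one_add_le_sup_seminorm_apply (𝕜 := ℝ) (m := (k, 0)) le_rfl le_rfl a z⟩
  refine ⟨fun p ↦ C * (1 + ‖p‖) ^ (-(k : ℝ)),
    (Measure.integrable_pow_neg_integrablePower μ).const_mul C, fun z ↦ ?_⟩
  have hz : 0 < 1 + ‖z.2‖ := by positivity
  change ‖a z‖ ≤ C * (1 + ‖z.2‖) ^ (-(k : ℝ))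
  rw [rpow_neg hz.le, rpow_natCast, ← div_eq_mul_inv, le_div_iff₀ (by positivity), mul_comm]
  calc (1 + ‖z.2‖) ^ k * ‖a z‖ ≤ (1 + ‖z‖) ^ k * ‖a z‖ := by gcongr; exact norm_snd_le z
    _ ≤ C := hC z

lemma norm_exp_I_div_mul_ofReal (hbar t : ℝ) : ‖Complex.exp (I / (hbar : ℂ) * (t : ℂ))‖ = 1 := by
  rw [show I / (hbar : ℂ) * t = ((t / hbar : ℝ) : ℂ) * I by push_cast; ring,
    norm_exp_ofReal_mul_I]

lemma conj_exp_I_div_mul_ofReal (hbar t : ℝ) :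
    (starRingEnd ℂ) (Complex.exp (I / (hbar : ℂ) * (t : ℂ))) =
      Complex.exp (I / (hbar : ℂ) * ((-t : ℝ) : ℂ)) := by
  rw [← exp_conj]
  simp only [map_mul, map_div₀, conj_I, conj_ofReal, ofReal_neg, neg_div, neg_mul, mul_neg]

section ShubinKernel

variable (hbar : ℝ) {n : ℕ} (τ : ℝ)

lemma neg_dotR_sub (p x y : Fin n → ℝ) : -dotR p (x - y) = dotR p (y - x) := by
  simp only [dotR, ← Finset.sum_neg_distrib, ← mul_neg, Pi.sub_apply, neg_sub]

/-- The Schwartz kernel of the Shubin `τ`-operator `Op_τ(a)`, with the normalising factor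
`(2πhbar)^(−n)` included. -/
def shubinKernel (a : ((Fin n → ℝ) × (Fin n → ℝ)) → ℂ) (x y : Fin n → ℝ) : ℂ :=
  ((((2 * π * hbar) ^ n : ℝ))⁻¹ : ℂ) *
    ∫ p : Fin n → ℝ, Complex.exp ((I / (hbar : ℂ)) * (dotR p (x - y) : ℝ)) *
      a (τ • x + (1 - τ) • y, p)

lemma shubinOp_eq_integral_shubinKernel (a : ((Fin n → ℝ) × (Fin n → ℝ)) → ℂ)
    (ψ : (Fin n → ℝ) → ℂ) (x : Fin n → ℝ) :
    ShubinOp hbar τ a ψ x = ∫ y, shubinKernel hbar τ a x y * ψ y := by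
  simp only [ShubinOp, shubinKernel, mul_assoc, integral_const_mul]

lemma conj_shubinKernel (a : ((Fin n → ℝ) × (Fin n → ℝ)) → ℂ) (x y : Fin n → ℝ) :
    (starRingEnd ℂ) (shubinKernel hbar τ a x y) =
      shubinKernel hbar (1 - τ) (fun z ↦ (starRingEnd ℂ) (a z)) y x := by
  simp only [shubinKernel, map_mul, map_inv₀, conj_ofReal, ← integral_conj,
    conj_exp_I_div_mul_ofReal, neg_dotR_sub, sub_sub_cancel, add_comm]

variable {a : ((Fin n → ℝ) × (Fin n → ℝ)) → ℂ}

lemma norm_shubinKernel_le {g : (Fin n → ℝ) → ℝ} (hg : Integrable g) (ha : ∀ z, ‖a z‖ ≤ g z.2)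
    (x y : Fin n → ℝ) :
    ‖shubinKernel hbar τ a x y‖ ≤ ‖(2 * π * hbar) ^ n‖⁻¹ * ∫ p, g p := by
  rw [shubinKernel, norm_mul, norm_inv, norm_real]
  gcongr
  refine norm_integral_le_of_norm_le hg (.of_forall fun p ↦ ?_)
  rw [norm_mul, norm_exp_I_div_mul_ofReal, one_mul]
  exact ha _

lemma stronglyMeasurable_shubinKernel (ha : Measurable a) :
    StronglyMeasurable (Function.uncurry (shubinKernel hbar τ a)) := by
  refine StronglyMeasurable.const_mul (StronglyMeasurable.integral_prod_right'
    (f := fun r : ((Fin n → ℝ) × (Fin n → ℝ)) × (Fin n → ℝ) ↦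
      Complex.exp ((I / (hbar : ℂ)) * (dotR r.2 (r.1.1 - r.1.2) : ℝ)) *
        a (τ • r.1.1 + (1 - τ) • r.1.2, r.2)) ?_) _
  apply Measurable.stronglyMeasurable
  unfold dotR
  fun_prop

end ShubinKernel

theorem shubinOp_adjoint_general {hbar : ℝ} (_hh : hbar ≠ 0) {n : ℕ} (τ : ℝ)
    {a : ((Fin n → ℝ) × (Fin n → ℝ)) → ℂ} (ha : Measurable a)
    {g : (Fin n → ℝ) → ℝ} (hg : Integrable g) (hag : ∀ z, ‖a z‖ ≤ g z.2)
    {ψ φ : (Fin n → ℝ) → ℂ} (hψ : Integrable ψ) (hφ : Integrable φ) :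
    ∫ x, ShubinOp hbar τ a ψ x * (starRingEnd ℂ) (φ x) =
      ∫ y, ψ y * (starRingEnd ℂ)
        (ShubinOp hbar (1 - τ) (fun z ↦ (starRingEnd ℂ) (a z)) φ y) := by
  simp only [shubinOp_eq_integral_shubinKernel, ← conj_shubinKernel]
  exact integral_kernel_mul_conj <| integrable_kernel_mul_conj
    (stronglyMeasurable_shubinKernel hbar τ ha).aestronglyMeasurable
    (norm_shubinKernel_le hbar τ hg hag) hψ hφ

/-- The formal adjoint of `Op_τ(a)` is `Op_{1−τ}(conj a)`:
`⟨A_τψ, conj φ⟩ = ⟨ψ, conj (B_{1−τ}φ)⟩` where `B_{1−τ} = Op_{1−τ}(conj a)`. -/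
theorem shubinOp_adjoint (hbar : ℝ) (hh : 0 < hbar) (n : ℕ) (hn : 1 ≤ n) (τ : ℝ)
    (a : SchwartzMap ((Fin n → ℝ) × (Fin n → ℝ)) ℂ)
    (ψ φ : SchwartzMap (Fin n → ℝ) ℂ) :
    ∫ x : Fin n → ℝ, ShubinOp hbar τ (⇑a) (⇑ψ) x * (starRingEnd ℂ) (φ x) =
      ∫ y : Fin n → ℝ,
        ψ y * (starRingEnd ℂ)
          (ShubinOp hbar (1 - τ) (fun z => (starRingEnd ℂ) (a z)) (⇑φ) y) := by
  obtain ⟨g, hg, hag⟩ := exists_integrable_norm_schwartzMap_le_snd volume a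
  exact shubinOp_adjoint_general hh.ne' τ a.continuous.measurable hg hag ψ.integrable φ.integrable

end
end

section
/- For every real τ, all Schwartz functions ψ, φ : ℝⁿ → ℂ and every z = (x,p) ∈ ℝ²ⁿ, the symplectic Fourier transform of the τ-Wigner distribution is the phase-modulated ambiguity function: F_σ(Wig_τ(ψ,φ))(z) = e^((i/(2ħ))(2τ−1) p·x) · Amb(ψ,φ)(z). In particular, for τ = 1/2, F_σ(Wig(ψ,φ)) = Amb(ψ,φ). -/
open MeasureTheory Real Complex

noncomputable section

/-!
For fixed `x`, `Wig_τ(ψ, φ)(x, ·)` is, up to a constant, the `ħ`-Fourier transform of the slice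
`H(x, ·)` of the Schwartz function `H(x, y) = ψ(x + τy) conj(φ(x - (1 - τ)y))`. Hence it is jointly
integrable, Fubini applies to its symplectic Fourier transform, and the inner integral over momenta
undoes the `ħ`-Fourier transform by Fourier inversion: it returns `H(x', x)`. The remaining
position integral becomes the ambiguity function after the translation `x' ↦ x' - (τ - 1/2)x`,
which produces the phase.
-/

open scoped FourierTransform SchwartzMap ContDiff

section Calculus

variable {𝕜 E F G G' W : Type*} [NontriviallyNormedField 𝕜]
  [NormedAddCommGroup E] [NormedSpace 𝕜 E] [NormedAddCommGroup F] [NormedSpace 𝕜 F]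
  [NormedAddCommGroup G] [NormedSpace 𝕜 G] [NormedAddCommGroup G'] [NormedSpace 𝕜 G']
  [NormedAddCommGroup W] [NormedSpace 𝕜 W]

lemma norm_compContinuousLinearMap_le_of_norm_le_one {l : ℕ} (A : F [×l]→L[𝕜] G)
    {g : E →L[𝕜] F} (hg : ‖g‖ ≤ 1) : ‖A.compContinuousLinearMap fun _ => g‖ ≤ ‖A‖ :=
  (A.norm_compContinuousLinearMap_le _).trans <|
    mul_le_of_le_one_right (norm_nonneg _) <| by
      simpa using pow_le_one₀ (norm_nonneg g) hg

lemma norm_iteratedFDeriv_comp_le_of_norm_le_one {f : F → G} {l : ℕ} (hf : ContDiff 𝕜 l f)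
    {g : E →L[𝕜] F} (hg : ‖g‖ ≤ 1) (x : E) :
    ‖iteratedFDeriv 𝕜 l (f ∘ g) x‖ ≤ ‖iteratedFDeriv 𝕜 l f (g x)‖ := by
  rw [g.iteratedFDeriv_comp_right hf x le_rfl]
  exact norm_compContinuousLinearMap_le_of_norm_le_one _ hg

lemma iteratedFDeriv_prodMk_right {f : E × F → G} {l : ℕ} (hf : ContDiff 𝕜 l f) (x : E) (y : F) :
    iteratedFDeriv 𝕜 l (fun y' => f (x, y')) y =
      (iteratedFDeriv 𝕜 l f (x, y)).compContinuousLinearMap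
        fun _ => ContinuousLinearMap.inr 𝕜 E F := by
  have hcomp : (fun y' => f (x, y')) =
      (fun z => f ((x, 0) + z)) ∘ ContinuousLinearMap.inr 𝕜 E F := by ext; simp
  have hshift : ContDiff 𝕜 l fun z => f ((x, 0) + z) := hf.comp (contDiff_const.add contDiff_id)
  rw [hcomp, ContinuousLinearMap.iteratedFDeriv_comp_right _ hshift y le_rfl,
    iteratedFDeriv_comp_add_left]
  simp

lemma norm_iteratedFDeriv_bilinear_prod_le (B : G →L[𝕜] G' →L[𝕜] W) {f : E → G} {g : F → G'}
    {l : ℕ} (hf : ContDiff 𝕜 l f) (hg : ContDiff 𝕜 l g) (z : E × F) :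
    ‖iteratedFDeriv 𝕜 l (fun z : E × F => B (f z.1) (g z.2)) z‖ ≤
      ‖B‖ * ∑ i ∈ Finset.range (l + 1), (l.choose i : ℝ) *
        ‖iteratedFDeriv 𝕜 i f z.1‖ * ‖iteratedFDeriv 𝕜 (l - i) g z.2‖ := by
  refine (B.norm_iteratedFDeriv_le_of_bilinear (hf.comp contDiff_fst) (hg.comp contDiff_snd) z
    le_rfl).trans ?_
  gcongr with i hi
  · exact norm_iteratedFDeriv_comp_le_of_norm_le_one (g := .fst 𝕜 E F)
      (hf.of_le (mod_cast Finset.mem_range_succ_iff.1 hi)) (ContinuousLinearMap.norm_fst_le ..) z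
  · exact norm_iteratedFDeriv_comp_le_of_norm_le_one (g := .snd 𝕜 E F)
      (hg.of_le (mod_cast Nat.sub_le l i)) (ContinuousLinearMap.norm_snd_le ..) z

end Calculus

section PartialTransform

variable {E F F' G G' W : Type*}
  [NormedAddCommGroup E] [NormedSpace ℝ E] [NormedAddCommGroup F] [NormedSpace ℝ F]
  [NormedAddCommGroup F'] [NormedSpace ℝ F'] [NormedAddCommGroup G] [NormedSpace ℝ G]
  [NormedAddCommGroup G'] [NormedSpace ℝ G'] [NormedAddCommGroup W] [NormedSpace ℝ W]

/-- The slice `H (x, ·)` of a Schwartz function `H` of two variables. -/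
def schwartzSlice (H : 𝓢(E × F, G)) (x : E) : 𝓢(F, G) where
  toFun y := H (x, y)
  smooth' := (H.smooth ⊤).comp (contDiff_prodMk_right x)
  decay' k l := by
    obtain ⟨C, hC⟩ := H.decay' k l
    refine ⟨C, fun y => le_trans ?_ (hC (x, y))⟩
    rw [iteratedFDeriv_prodMk_right (H.smooth l)]
    gcongr
    · exact le_max_right ‖x‖ ‖y‖
    · exact norm_compContinuousLinearMap_le_of_norm_le_one _
        (ContinuousLinearMap.norm_inr_le_one ..)

@[simp]
lemma schwartzSlice_apply (H : 𝓢(E × F, G)) (x : E) (y : F) : schwartzSlice H x y = H (x, y) :=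
  rfl

lemma iteratedFDeriv_schwartzSlice (H : 𝓢(E × F, G)) (l : ℕ) (x : E) (y : F) :
    iteratedFDeriv ℝ l (schwartzSlice H x) y =
      (iteratedFDeriv ℝ l H (x, y)).compContinuousLinearMap
        fun _ => ContinuousLinearMap.inr ℝ E F :=
  iteratedFDeriv_prodMk_right (H.smooth l) x y

lemma norm_pow_mul_seminorm_schwartzSlice_le (H : 𝓢(E × F, G)) (N k l : ℕ) (x : E) :
    ‖x‖ ^ N * SchwartzMap.seminorm ℝ k l (schwartzSlice H x) ≤
      SchwartzMap.seminorm ℝ (N + k) l H := by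
  rw [← norm_of_nonneg (by positivity : 0 ≤ ‖x‖ ^ N), ← map_smul_eq_mul]
  refine SchwartzMap.seminorm_le_bound ℝ k l _ (apply_nonneg _ _) fun y => ?_
  calc ‖y‖ ^ k * ‖iteratedFDeriv ℝ l (‖x‖ ^ N • schwartzSlice H x) y‖
      = ‖x‖ ^ N * ‖y‖ ^ k * ‖iteratedFDeriv ℝ l (schwartzSlice H x) y‖ := by
        rw [FunLike.coe_smul, iteratedFDeriv_const_smul_apply
          ((schwartzSlice H x).smooth l).contDiffAt, norm_smul, norm_pow, norm_norm]
        ring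
    _ ≤ ‖(x, y)‖ ^ N * ‖(x, y)‖ ^ k * ‖iteratedFDeriv ℝ l H (x, y)‖ := by
        rw [iteratedFDeriv_schwartzSlice]
        gcongr
        · exact le_max_left _ _
        · exact le_max_right _ _
        · exact norm_compContinuousLinearMap_le_of_norm_le_one _
            (ContinuousLinearMap.norm_inr_le_one ..)
    _ ≤ SchwartzMap.seminorm ℝ (N + k) l H := by
        rw [← pow_add]
        exact SchwartzMap.le_seminorm ℝ _ l H (x, y)

lemma norm_pow_mul_norm_iteratedFDeriv_sub_le (H : 𝓢(E × F, G)) (k l : ℕ) (x x' : E) (y : F) :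
    ‖y‖ ^ k * ‖iteratedFDeriv ℝ l H (x', y) - iteratedFDeriv ℝ l H (x, y)‖ ≤
      SchwartzMap.seminorm ℝ k (l + 1) H * ‖x' - x‖ := by
  have hdiff : Differentiable ℝ (iteratedFDeriv ℝ l H) :=
    (H.smooth ⊤).differentiable_iteratedFDeriv (mod_cast WithTop.coe_lt_top l)
  have hbound : ∀ z ∈ Set.univ ×ˢ {y},
      ‖fderiv ℝ (fun z => ‖y‖ ^ k • iteratedFDeriv ℝ l H z) z‖ ≤
        SchwartzMap.seminorm ℝ k (l + 1) H := by
    rintro ⟨a, b⟩ ⟨-, rfl : b = y⟩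
    rw [fderiv_fun_const_smul (hdiff _)]
    calc ‖‖b‖ ^ k • fderiv ℝ (iteratedFDeriv ℝ l H) (a, b)‖
        ≤ ‖b‖ ^ k * ‖fderiv ℝ (iteratedFDeriv ℝ l H) (a, b)‖ := by
          simpa using ContinuousLinearMap.opNorm_smul_le (‖b‖ ^ k)
            (fderiv ℝ (iteratedFDeriv ℝ l H) (a, b))
      _ ≤ ‖(a, b)‖ ^ k * ‖iteratedFDeriv ℝ (l + 1) H (a, b)‖ := by
          rw [norm_fderiv_iteratedFDeriv]
          gcongr
          exact le_max_right _ _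
      _ ≤ SchwartzMap.seminorm ℝ k (l + 1) H := SchwartzMap.le_seminorm ℝ k (l + 1) H (a, b)
  have hmvt := (convex_univ.prod (convex_singleton y)).norm_image_sub_le_of_norm_fderiv_le
    (fun z _ => (hdiff z).const_smul (‖y‖ ^ k)) hbound
    (x := (x, y)) (y := (x', y)) (by simp) (by simp)
  simpa [← smul_sub, norm_smul] using hmvt

lemma seminorm_schwartzSlice_sub_le (H : 𝓢(E × F, G)) (k l : ℕ) (x x' : E) :
    SchwartzMap.seminorm ℝ k l (schwartzSlice H x' - schwartzSlice H x) ≤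
      SchwartzMap.seminorm ℝ k (l + 1) H * ‖x' - x‖ := by
  refine SchwartzMap.seminorm_le_bound ℝ k l _ (by positivity) fun y => ?_
  refine le_trans ?_ (norm_pow_mul_norm_iteratedFDeriv_sub_le H k l x x' y)
  rw [FunLike.coe_sub, iteratedFDeriv_sub_apply ((schwartzSlice H x').smooth l).contDiffAt
    ((schwartzSlice H x).smooth l).contDiffAt, iteratedFDeriv_schwartzSlice,
    iteratedFDeriv_schwartzSlice]
  gcongr
  exact norm_compContinuousLinearMap_le_of_norm_le_one
    (iteratedFDeriv ℝ l H (x', y) - iteratedFDeriv ℝ l H (x, y))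
    (ContinuousLinearMap.norm_inr_le_one ..)

lemma continuous_schwartzSlice (H : 𝓢(E × F, G)) : Continuous (schwartzSlice H) := by
  refine continuous_iff_continuousAt.2 fun x =>
    ((schwartz_withSeminorms ℝ F G).tendsto_nhds _ _).2 fun ⟨k, l⟩ ε hε => ?_
  have hlim : Filter.Tendsto (fun x' => SchwartzMap.seminorm ℝ k (l + 1) H * ‖x' - x‖)
      (nhds x) (nhds 0) :=
    Continuous.tendsto' (by fun_prop) _ _ (by simp)
  filter_upwards [hlim.eventually_lt_const hε] with x' hx'
  exact (seminorm_schwartzSlice_sub_le H k l x x').trans_lt hx'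

lemma exists_norm_pow_mul_norm_apply_schwartzSlice_le (H : 𝓢(E × F, G)) (T : 𝓢(F, G) →L[ℝ] W)
    (N : ℕ) : ∃ C, ∀ x, ‖x‖ ^ N * ‖T (schwartzSlice H x)‖ ≤ C := by
  obtain ⟨s, C, -, hC⟩ := Seminorm.bound_of_continuous (schwartz_withSeminorms ℝ F G)
    ((normSeminorm ℝ W).comp T.toLinearMap) (continuous_norm.comp T.continuous)
  refine ⟨C * ∑ i ∈ s, SchwartzMap.seminorm ℝ (N + i.1) i.2 H, fun x => ?_⟩
  have hT : ‖T (schwartzSlice H x)‖ ≤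
      C * ∑ i ∈ s, SchwartzMap.seminorm ℝ i.1 i.2 (schwartzSlice H x) := by
    refine (hC (schwartzSlice H x)).trans (mul_le_mul_of_nonneg_left ?_ C.coe_nonneg)
    exact (Seminorm.finset_sup_le_sum (schwartzSeminormFamily ℝ F G) s _).trans_eq
      (sum_apply ..)
  calc ‖x‖ ^ N * ‖T (schwartzSlice H x)‖
      ≤ ‖x‖ ^ N * (C * ∑ i ∈ s, SchwartzMap.seminorm ℝ i.1 i.2 (schwartzSlice H x)) := by gcongr
    _ = C * ∑ i ∈ s, ‖x‖ ^ N * SchwartzMap.seminorm ℝ i.1 i.2 (schwartzSlice H x) := by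
        rw [mul_left_comm, Finset.mul_sum]
    _ ≤ C * ∑ i ∈ s, SchwartzMap.seminorm ℝ (N + i.1) i.2 H := by
        gcongr with i
        exact norm_pow_mul_seminorm_schwartzSlice_le H N i.1 i.2 x

lemma continuous_uncurry_apply_schwartzSlice (H : 𝓢(E × F, G)) (T : 𝓢(F, G) →L[ℝ] 𝓢(F', G')) :
    Continuous fun z : E × F' => T (schwartzSlice H z.1) z.2 := by
  have hT : Continuous fun x =>
      SchwartzMap.toBoundedContinuousFunctionCLM ℝ F' G' (T (schwartzSlice H x)) :=
    (ContinuousLinearMap.continuous _).comp (T.continuous.comp (continuous_schwartzSlice H))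
  exact (hT.comp continuous_fst).eval continuous_snd

/-- The slices of `H` decay rapidly in every continuous seminorm, in particular in the seminorm
`f ↦ ‖T f‖_{L¹}`. -/
lemma integrable_apply_schwartzSlice
    [MeasurableSpace E] [BorelSpace E] [SecondCountableTopology E]
    [MeasurableSpace F'] [BorelSpace F'] [SecondCountableTopology F']
    {μ : Measure E} [μ.HasTemperateGrowth] {ν : Measure F'} [ν.HasTemperateGrowth] [SFinite ν]
    (H : 𝓢(E × F, G)) (T : 𝓢(F, G) →L[ℝ] 𝓢(F', G')) :
    Integrable (fun z : E × F' => T (schwartzSlice H z.1) z.2) (μ.prod ν) := by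
  refine (integrable_prod_iff
    (continuous_uncurry_apply_schwartzSlice H T).aestronglyMeasurable).2
    ⟨.of_forall fun x => (T (schwartzSlice H x)).integrable, ?_⟩
  let L : 𝓢(F, G) →L[ℝ] Lp G' 1 ν := (SchwartzMap.toLpCLM ℝ G' 1 ν).comp T
  obtain ⟨C₁, hC₁⟩ := exists_norm_pow_mul_norm_apply_schwartzSlice_le H L 0
  obtain ⟨C₂, hC₂⟩ := exists_norm_pow_mul_norm_apply_schwartzSlice_le H L μ.integrablePower
  have hL : Continuous fun x => L (schwartzSlice H x) :=
    L.continuous.comp (continuous_schwartzSlice H)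
  have hint := integrable_of_le_of_pow_mul_le (μ := μ) (k := 0) (by simpa using hC₁)
    (by simpa using hC₂) hL.aestronglyMeasurable
  simpa [L, SchwartzMap.norm_toLp_one] using hint

end PartialTransform

section TensorProduct

lemma norm_prodMk_pow_le {E F : Type*} [SeminormedAddCommGroup E] [SeminormedAddCommGroup F]
    (a : E) (b : F) (k : ℕ) : ‖(a, b)‖ ^ k ≤ (1 + ‖a‖) ^ k * (1 + ‖b‖) ^ k := by
  rw [← mul_pow]
  gcongr
  refine max_le ?_ ?_ <;> nlinarith [norm_nonneg a, norm_nonneg b]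

variable {E F G G' W : Type*}
  [NormedAddCommGroup E] [NormedSpace ℝ E] [NormedAddCommGroup F] [NormedSpace ℝ F]
  [NormedAddCommGroup G] [NormedSpace ℝ G] [NormedAddCommGroup G'] [NormedSpace ℝ G']
  [NormedAddCommGroup W] [NormedSpace ℝ W]

lemma exists_one_add_norm_pow_mul_norm_iteratedFDeriv_le (f : 𝓢(E, G)) (k l : ℕ) :
    ∃ C, ∀ i ≤ l, ∀ x, (1 + ‖x‖) ^ k * ‖iteratedFDeriv ℝ i f x‖ ≤ C :=
  ⟨_, fun _ hi x => SchwartzMap.one_add_le_sup_seminorm_apply (𝕜 := ℝ) (m := (k, l)) le_rfl hi f x⟩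

/-- The tensor product `(x, y) ↦ B (f x) (g y)` of two Schwartz functions with respect to a
continuous bilinear map `B`. -/
def schwartzTensor (B : G →L[ℝ] G' →L[ℝ] W) (f : 𝓢(E, G)) (g : 𝓢(F, G')) : 𝓢(E × F, W) where
  toFun z := B (f z.1) (g z.2)
  smooth' := B.isBoundedBilinearMap.contDiff.comp
    (((f.smooth ⊤).comp contDiff_fst).prodMk ((g.smooth ⊤).comp contDiff_snd))
  decay' k l := by
    obtain ⟨C, hC⟩ := exists_one_add_norm_pow_mul_norm_iteratedFDeriv_le f k l
    obtain ⟨D, hD⟩ := exists_one_add_norm_pow_mul_norm_iteratedFDeriv_le g k l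
    refine ⟨‖B‖ * ∑ i ∈ Finset.range (l + 1), l.choose i * (C * D), fun ⟨a, b⟩ => ?_⟩
    calc ‖(a, b)‖ ^ k * ‖iteratedFDeriv ℝ l (fun z : E × F => B (f z.1) (g z.2)) (a, b)‖
        ≤ ((1 + ‖a‖) ^ k * (1 + ‖b‖) ^ k) *
            (‖B‖ * ∑ i ∈ Finset.range (l + 1), (l.choose i : ℝ) *
              ‖iteratedFDeriv ℝ i f a‖ * ‖iteratedFDeriv ℝ (l - i) g b‖) := by
          gcongr
          · exact norm_prodMk_pow_le a b k
          · exact norm_iteratedFDeriv_bilinear_prod_le B (f.smooth l) (g.smooth l) (a, b)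
      _ = ‖B‖ * ∑ i ∈ Finset.range (l + 1), (l.choose i : ℝ) *
            (((1 + ‖a‖) ^ k * ‖iteratedFDeriv ℝ i f a‖) *
              ((1 + ‖b‖) ^ k * ‖iteratedFDeriv ℝ (l - i) g b‖)) := by
          rw [mul_left_comm, Finset.mul_sum]
          congr! 2
          ring
      _ ≤ ‖B‖ * ∑ i ∈ Finset.range (l + 1), l.choose i * (C * D) := by
          gcongr with i hi
          · exact (by positivity : (0 : ℝ) ≤ _).trans (hC 0 l.zero_le a)
          · exact hC i (Finset.mem_range_succ_iff.1 hi) a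
          · exact hD (l - i) (l.sub_le i) b

end TensorProduct

section WignerKernel

variable {V : Type*} [NormedAddCommGroup V] [NormedSpace ℝ V]

/-- The linear change of variables `(x, y) ↦ (x + τ y, x - (1 - τ) y)` underlying the `τ`-Wigner
distribution. -/
def tauShear (τ : ℝ) : (V × V) ≃L[ℝ] (V × V) where
  toFun z := (z.1 + τ • z.2, z.1 - (1 - τ) • z.2)
  invFun w := ((1 - τ) • w.1 + τ • w.2, w.1 - w.2)
  map_add' z w := by ext <;> dsimp <;> module
  map_smul' c z := by ext <;> dsimp <;> module
  left_inv z := by ext <;> dsimp <;> module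
  right_inv w := by ext <;> dsimp <;> module
  continuous_toFun := by fun_prop
  continuous_invFun := by fun_prop

/-- The Schwartz function `(x, y) ↦ ψ(x + τ y) conj(φ(x - (1 - τ) y))`, whose partial Fourier
transform in `y` is the `τ`-Wigner distribution. -/
def wignerKernel (τ : ℝ) (ψ φ : 𝓢(V, ℂ)) : 𝓢(V × V, ℂ) :=
  SchwartzMap.compCLMOfContinuousLinearEquiv ℝ (tauShear τ) <|
    schwartzTensor (ContinuousLinearMap.mul ℝ ℂ) ψ
      (SchwartzMap.postcompCLM (conjCLE : ℂ →L[ℝ] ℂ) φ)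

lemma wignerKernel_apply (τ : ℝ) (ψ φ : 𝓢(V, ℂ)) (x y : V) :
    wignerKernel τ ψ φ (x, y) =
      ψ (x + τ • y) * (starRingEnd ℂ) (φ (x - (1 - τ) • y)) :=
  rfl

end WignerKernel

section FourierHbar

variable {n : ℕ}

/-- Transports a Schwartz function to `EuclideanSpace`, where Mathlib's Fourier transform lives. -/
def schwartzToEuclidean (n : ℕ) : 𝓢(Fin n → ℝ, ℂ) →L[ℂ] 𝓢(EuclideanSpace ℝ (Fin n), ℂ) :=
  SchwartzMap.compCLMOfContinuousLinearEquiv ℂ (EuclideanSpace.equiv (Fin n) ℝ)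

lemma schwartzToEuclidean_apply (f : 𝓢(Fin n → ℝ, ℂ)) (v : EuclideanSpace ℝ (Fin n)) :
    schwartzToEuclidean n f v = f v.ofLp :=
  rfl

lemma dotR_eq_inner (p y : Fin n → ℝ) :
    dotR p y = inner ℝ (WithLp.toLp 2 y) (WithLp.toLp 2 p) := by
  simp [dotR, PiLp.inner_apply]

lemma dotR_sub (p y y' : Fin n → ℝ) : dotR p (y - y') = dotR p y - dotR p y' :=
  dotProduct_sub p y y'

lemma dotR_smul (c : ℝ) (p y : Fin n → ℝ) : dotR p (c • y) = c * dotR p y :=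
  dotProduct_smul c p y

lemma integral_comp_ofLp {ι X : Type*} [Fintype ι] [NormedAddCommGroup X] [NormedSpace ℝ X]
    (f : (ι → ℝ) → X) : ∫ v : EuclideanSpace ℝ ι, f v.ofLp = ∫ y, f y :=
  (PiLp.volume_preserving_ofLp ι).integral_comp
    (MeasurableEquiv.toLp 2 (ι → ℝ)).symm.measurableEmbedding f

lemma integral_exp_inner_smul_fourier {V X : Type*} [NormedAddCommGroup V] [InnerProductSpace ℝ V]
    [FiniteDimensional ℝ V] [MeasurableSpace V] [BorelSpace V] [NormedAddCommGroup X]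
    [NormedSpace ℂ X] [CompleteSpace X] (f : 𝓢(V, X)) (x : V) :
    ∫ w, cexp (↑(2 * π * inner ℝ w x) * I) • 𝓕 f w = f x := by
  rw [← Real.fourierInv_eq', ← SchwartzMap.fourierInv_coe, FourierTransform.fourierInv_fourier_eq]

lemma fourierHbar_eq_fourier (hbar : ℝ) (f : 𝓢(Fin n → ℝ, ℂ)) (p : Fin n → ℝ) :
    FourierHbar hbar f p = ((√((2 * π * hbar) ^ n))⁻¹ : ℂ) *
      𝓕 (schwartzToEuclidean n f) ((2 * π * hbar)⁻¹ • WithLp.toLp 2 p) := by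
  rw [SchwartzMap.fourier_coe, Real.fourier_eq', FourierHbar, ← integral_comp_ofLp]
  congr! 4 with v
  rw [inner_smul_right, ← WithLp.toLp_ofLp 2 v, ← dotR_eq_inner]
  push_cast
  field_simp

/-- `FourierHbar` as a continuous linear operator on Schwartz functions. -/
def fourierHbarCLM {hbar : ℝ} (hh : hbar ≠ 0) (n : ℕ) :
    𝓢(Fin n → ℝ, ℂ) →L[ℂ] 𝓢(Fin n → ℝ, ℂ) :=
  ((√((2 * π * hbar) ^ n))⁻¹ : ℂ) •
    SchwartzMap.compCLMOfContinuousLinearEquiv ℂ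
      ((EuclideanSpace.equiv (Fin n) ℝ).symm.trans
        (.smulLeft (Units.mk0 (2 * π * hbar)⁻¹ (by positivity)))) ∘L
    FourierTransform.fourierCLM ℂ 𝓢(EuclideanSpace ℝ (Fin n), ℂ) ∘L
    schwartzToEuclidean n

lemma fourierHbarCLM_apply {hbar : ℝ} (hh : hbar ≠ 0) (f : 𝓢(Fin n → ℝ, ℂ)) (p : Fin n → ℝ) :
    fourierHbarCLM hh n f p = FourierHbar hbar f p :=
  (fourierHbar_eq_fourier hbar f p).symm

lemma exp_dotR_eq_exp_inner (hbar : ℝ) (p x : Fin n → ℝ) :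
    cexp (I / hbar * dotR p x) =
      cexp (↑(2 * π * inner ℝ ((2 * π * hbar)⁻¹ • WithLp.toLp 2 p) (WithLp.toLp 2 x)) * I) := by
  rw [dotR_eq_inner, real_inner_smul_left, real_inner_comm]
  congr 1
  push_cast
  field_simp

lemma fourierHbar_inversion {hbar : ℝ} (hh : 0 < hbar) (f : 𝓢(Fin n → ℝ, ℂ)) (x : Fin n → ℝ) :
    ((√((2 * π * hbar) ^ n))⁻¹ : ℂ) *
        ∫ p, cexp (I / hbar * dotR p x) * FourierHbar hbar f p = f x := by
  set κ : ℝ := 2 * π * hbar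
  have hκ0 : 0 < κ := by positivity
  have hsqrt : ((√(κ ^ n) : ℝ) : ℂ) ^ 2 = κ ^ n := by
    exact_mod_cast Real.sq_sqrt (by positivity)
  calc ((√(κ ^ n))⁻¹ : ℂ) * ∫ p, cexp (I / hbar * dotR p x) * FourierHbar hbar f p
      = ((√(κ ^ n))⁻¹ : ℂ) * ((√(κ ^ n) : ℂ)⁻¹ *
          ∫ w : EuclideanSpace ℝ (Fin n),
            cexp (↑(2 * π * inner ℝ (κ⁻¹ • w) (WithLp.toLp 2 x)) * I) *
              𝓕 (schwartzToEuclidean n f) (κ⁻¹ • w)) := by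
        congr 1
        rw [← integral_comp_ofLp, ← integral_const_mul]
        congr! 2
        rw [exp_dotR_eq_exp_inner, fourierHbar_eq_fourier, WithLp.toLp_ofLp, mul_left_comm]
    _ = ((√(κ ^ n))⁻¹ : ℂ) * ((√(κ ^ n) : ℂ)⁻¹ * (κ ^ n * f x)) := by
        rw [Measure.integral_comp_inv_smul_of_nonneg volume
          (fun w => cexp (↑(2 * π * inner ℝ w (WithLp.toLp 2 x)) * I) *
            𝓕 (schwartzToEuclidean n f) w) hκ0.le, finrank_euclideanSpace_fin]
        simp_rw [← smul_eq_mul (a := cexp _), integral_exp_inner_smul_fourier]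
        simp [schwartzToEuclidean_apply]
    _ = f x := by
        rw [← hsqrt]
        have : (√(κ ^ n) : ℂ) ≠ 0 := by exact_mod_cast (Real.sqrt_pos.2 (by positivity)).ne'
        field_simp

lemma symplFT_eq_integral_integral {hbar : ℝ} {a : (Fin n → ℝ) × (Fin n → ℝ) → ℂ}
    (ha : Integrable a) (x p : Fin n → ℝ) :
    symplFT hbar a (x, p) = ((((2 * π * hbar) ^ n : ℝ))⁻¹ : ℂ) *
      ∫ u, cexp (-(I / hbar) * dotR p u) * ∫ w, cexp (I / hbar * dotR w x) * a (u, w) := by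
  have hphase (z : (Fin n → ℝ) × (Fin n → ℝ)) :
      ‖cexp (-(I / hbar) * ((dotR p z.1 - dotR z.2 x : ℝ) : ℂ))‖ = 1 := by
    rw [← norm_exp_ofReal_mul_I (-(dotR p z.1 - dotR z.2 x) / hbar)]
    congr 2
    push_cast
    ring
  have hint : Integrable fun z : (Fin n → ℝ) × (Fin n → ℝ) =>
      cexp (-(I / hbar) * ((dotR p z.1 - dotR z.2 x : ℝ) : ℂ)) * a z :=
    ha.bdd_mul (c := 1) (by unfold dotR; fun_prop) (.of_forall fun z => (hphase z).le)
  rw [symplFT, Measure.volume_eq_prod, integral_prod _ hint]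
  congr! 3 with u
  rw [← integral_const_mul]
  congr! 2
  rw [← mul_assoc, ← Complex.exp_add]
  congr 2
  push_cast
  ring

end FourierHbar

section Wigner

variable {n : ℕ} {hbar : ℝ} (τ : ℝ)

lemma wigTau_eq_fourierHbar_schwartzSlice (hh : 0 < hbar) (ψ φ : 𝓢(Fin n → ℝ, ℂ))
    (x p : Fin n → ℝ) :
    WigTau hbar τ ψ φ x p = ((√((2 * π * hbar) ^ n))⁻¹ : ℂ) *
      FourierHbar hbar (schwartzSlice (wignerKernel τ ψ φ) x) p := by
  have hsqrt : (((2 * π * hbar) ^ n : ℝ) : ℂ) = √((2 * π * hbar) ^ n) * √((2 * π * hbar) ^ n) := by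
    exact_mod_cast (Real.mul_self_sqrt (by positivity)).symm
  simp only [WigTau, FourierHbar, schwartzSlice_apply, wignerKernel_apply]
  rw [hsqrt, mul_inv, mul_assoc]
  simp only [mul_assoc]

lemma integrable_wigTau (hh : 0 < hbar) (ψ φ : 𝓢(Fin n → ℝ, ℂ)) :
    Integrable fun z : (Fin n → ℝ) × (Fin n → ℝ) => WigTau hbar τ ψ φ z.1 z.2 := by
  simp_rw [wigTau_eq_fourierHbar_schwartzSlice τ hh, ← fourierHbarCLM_apply hh.ne']
  exact (integrable_apply_schwartzSlice (wignerKernel τ ψ φ)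
    ((fourierHbarCLM hh.ne' n).restrictScalars ℝ)).const_mul _

lemma integral_exp_mul_wigTau (hh : 0 < hbar) (ψ φ : 𝓢(Fin n → ℝ, ℂ)) (x y : Fin n → ℝ) :
    ∫ p, cexp (I / hbar * dotR p y) * WigTau hbar τ ψ φ x p =
      ψ (x + τ • y) * (starRingEnd ℂ) (φ (x - (1 - τ) • y)) := by
  rw [← wignerKernel_apply, ← schwartzSlice_apply, ← fourierHbar_inversion hh,
    ← integral_const_mul]
  simp_rw [wigTau_eq_fourierHbar_schwartzSlice τ hh, mul_left_comm]

lemma exp_mul_amb_eq_integral (ψ φ : (Fin n → ℝ) → ℂ) (x p : Fin n → ℝ) :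
    cexp (I / ((2 * hbar : ℝ) : ℂ) * (((2 * τ - 1) * dotR p x : ℝ) : ℂ)) * Amb hbar ψ φ x p =
      ((((2 * π * hbar) ^ n : ℝ))⁻¹ : ℂ) * ∫ u, cexp (-(I / hbar) * dotR p u) *
        (ψ (u + τ • x) * (starRingEnd ℂ) (φ (u - (1 - τ) • x))) := by
  rw [Amb, mul_left_comm]
  congr 1
  rw [← integral_const_mul]
  refine Eq.trans ?_ (integral_sub_right_eq_self _ ((τ - 1 / 2) • x))
  congr 1 with u
  have hleft : u - (τ - 1 / 2) • x + τ • x = u + (1 / 2 : ℝ) • x := by module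
  have hright : u - (τ - 1 / 2) • x - (1 - τ) • x = u - (1 / 2 : ℝ) • x := by module
  rw [hleft, hright, dotR_sub, dotR_smul, ← mul_assoc, ← mul_assoc, ← mul_assoc,
    ← Complex.exp_add]
  congr 3
  push_cast
  ring

end Wigner

/-- The symplectic Fourier transform of the `τ`-Wigner distribution is the
phase-modulated ambiguity function:
`F_σ(Wig_τ(ψ,φ))(z) = e^((i/(2ħ))(2τ−1)p·x) Amb(ψ,φ)(z)`. -/
theorem symplFT_wigTau (hbar : ℝ) (hh : 0 < hbar) (n : ℕ) (hn : 1 ≤ n) (τ : ℝ)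
    (ψ φ : SchwartzMap (Fin n → ℝ) ℂ) (x p : Fin n → ℝ) :
    symplFT hbar (fun z => WigTau hbar τ (⇑ψ) (⇑φ) z.1 z.2) (x, p) =
      Complex.exp ((Complex.I / ((2 * hbar : ℝ) : ℂ)) *
          (((2 * τ - 1) * dotR p x : ℝ) : ℂ)) * Amb hbar (⇑ψ) (⇑φ) x p := by
  rw [symplFT_eq_integral_integral (integrable_wigTau τ hh ψ φ), exp_mul_amb_eq_integral]
  simp_rw [integral_exp_mul_wigTau τ hh]

end
end
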